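/- Let Γ = [γ_ij] ∈ ℝ^{p×p} be a connected interconnection and let Q : ℝ≥0 → Q̄_n be persistently exciting. Then the solutions x_i : ℝ≥0 → ℝ^n of the array ẋ_i(t) = Q_t Σ_{j≠i} γ_ij (x_j(t) − x_i(t)), i = 1,…,p, exponentially synchronize to the constant trajectory x̄(t) ≡ (r^T ⊗ I_n) x(0), where x(0) stacks x_1(0),…,x_p(0) and r ∈ ℝ^p satisfies r^T Γ = 0 and r^T 1 = 1; that is, there exist c, α > 0 with max_i |x_i(t) − x̄(t)| ≤ c e^{−α t} for all t ≥ 0. -/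

import Mathlib

open Matrix MeasureTheory Filter
open scoped Kronecker

noncomputable section

/-- Euclidean norm of a vector. -/
def eunorm {ι : Type*} [Fintype ι] (v : ι → ℝ) : ℝ := Real.sqrt (∑ i, v i ^ 2)

/-- Spectral (induced 2-) norm of a matrix. -/
def specNorm {m n : Type*} [Fintype m] [Fintype n] (M : Matrix m n ℝ) : ℝ :=
  sSup {c : ℝ | ∃ v : n → ℝ, eunorm v ≤ 1 ∧ c = eunorm (M.mulVec v)}

/-- Smallest singular value of a matrix. -/
def sigmaMin {m n : Type*} [Fintype m] [Fintype n] (M : Matrix m n ℝ) : ℝ :=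
  sInf {c : ℝ | ∃ v : n → ℝ, eunorm v = 1 ∧ c = eunorm (M.mulVec v)}

/-- Largest singular value of a matrix. -/
def sigmaMax {m n : Type*} [Fintype m] [Fintype n] (M : Matrix m n ℝ) : ℝ :=
  sSup {c : ℝ | ∃ v : n → ℝ, eunorm v = 1 ∧ c = eunorm (M.mulVec v)}

/-- A continuous-time interconnection matrix. -/
def IsInterconnection {p : ℕ} (Γ : Matrix (Fin p) (Fin p) ℝ) : Prop :=
  (∀ i j, i ≠ j → 0 ≤ Γ i j) ∧
  ∀ i, Γ i i = -∑ j ∈ Finset.univ.filter (fun j => j ≠ i), Γ i j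

/-- Connectedness of the graph of a matrix. -/
def ConnectedMat {p : ℕ} (Γ : Matrix (Fin p) (Fin p) ℝ) : Prop :=
  ∃ v : Fin p, ∀ u : Fin p, Relation.ReflTransGen (fun i j => 0 < Γ i j) u v

/-- Membership in `Q̄_n`: symmetric positive semidefinite with spectral norm at most 1. -/
def InQbar {n : ℕ} (R : Matrix (Fin n) (Fin n) ℝ) : Prop :=
  R.PosSemidef ∧ specNorm R ≤ 1

/-- `δ(ε, T) = min{ε/2, ε³/(240 T⁵)}`. -/
def deltaCT (ε T : ℝ) : ℝ := min (ε / 2) (ε ^ 3 / (240 * T ^ 5))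

/-- Sufficient excitation for `Q : ℝ≥0 → Q_n`. -/
def SuffExcitingCT {n : ℕ} (Q : ℝ → Matrix (Fin n) (Fin n) ℝ) : Prop :=
  ∃ ε T : ℕ → ℝ, (∀ i, 0 < ε i) ∧ (∀ i, 0 < T i) ∧
    (∀ i, ε i ≤ sigmaMin (Matrix.of fun a b =>
      ∫ t in (∑ j ∈ Finset.range i, T j)..((∑ j ∈ Finset.range i, T j) + T i), Q t a b)) ∧
    Tendsto (fun N => ∑ i ∈ Finset.range N, deltaCT (ε i) (T i)) atTop atTop

/-- Persistence of excitation for `Q : ℝ≥0 → Q_n`. -/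
def PersExcitingCT {n : ℕ} (Q : ℝ → Matrix (Fin n) (Fin n) ℝ) : Prop :=
  ∃ ε T : ℝ, 0 < ε ∧ 0 < T ∧ ∀ t : ℝ, 0 ≤ t →
    ε ≤ sigmaMin (Matrix.of fun a b => ∫ s in t..(t + T), Q s a b)

/-
Let `Y t` be the matrix with rows `x i t - xbar`. It satisfies `Ẏ = Γ Y (Q t)`, and `r ᵥ* Y = 0` is
preserved because `r ᵥ* Γ = 0`. For a small step `h` the matrix `A = 1 + h Γ` is stochastic with
positive diagonal, so by connectedness `A ^ N` tends to `1 rᵀ`, which vanishes on `r ᵥ* Y = 0`. A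
multiple `P` of the observability Gramian of `A` is therefore a Lyapunov matrix there, and
`V = tr (Yᵀ P Y)` satisfies `V' ≤ -tr (Y (Q t) Yᵀ)`. This dissipation may vanish at any given time.
However `Q t ^ 2 ≤ Q t` gives `‖Ẏ‖ ^ 2 ≤ ‖Γ‖ ^ 2 tr (Y (Q t) Yᵀ)`, so the displacement of `Y` on
an excitation window is controlled by the loss of `V`. Up to this displacement `Y` is constant on
the window, and persistent excitation makes `V` lose a fixed fraction of its value there.
-/

section Loewner

open scoped MatrixOrder

variable {ι κ : Type*} [Fintype ι] [Fintype κ]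

lemma eunorm_eq_norm_toLp (v : ι → ℝ) : eunorm v = ‖WithLp.toLp 2 v‖ := by
  simp [eunorm, EuclideanSpace.norm_eq]

open scoped Matrix.Norms.L2Operator in
lemma eunorm_mulVec_le_specNorm (M : Matrix ι κ ℝ) {v : κ → ℝ} (hv : eunorm v ≤ 1) :
    eunorm (M *ᵥ v) ≤ specNorm M := by
  classical
  refine le_csSup ⟨‖M‖, ?_⟩ ⟨v, hv, rfl⟩
  rintro _ ⟨w, hw, rfl⟩
  rw [eunorm_eq_norm_toLp] at hw ⊢
  exact (l2_opNorm_mulVec M (WithLp.toLp 2 w)).trans (mul_le_of_le_one_right (norm_nonneg _) hw)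

lemma sigmaMin_le_eunorm_mulVec (M : Matrix ι κ ℝ) {v : κ → ℝ} (hv : eunorm v = 1) :
    sigmaMin M ≤ eunorm (M *ᵥ v) := by
  refine csInf_le ⟨0, ?_⟩ ⟨v, hv, rfl⟩
  rintro _ ⟨w, -, rfl⟩
  exact Real.sqrt_nonneg _

variable [DecidableEq κ] {M : Matrix κ κ ℝ}

lemma eunorm_eigenvectorBasis (hM : M.IsHermitian) (j : κ) :
    eunorm (hM.eigenvectorBasis j) = 1 := by
  rw [eunorm_eq_norm_toLp]
  exact hM.eigenvectorBasis.norm_eq_one j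

lemma eunorm_mulVec_eigenvectorBasis (hM : M.IsHermitian) (j : κ) :
    eunorm (M *ᵥ hM.eigenvectorBasis j) = |hM.eigenvalues j| := by
  rw [hM.mulVec_eigenvectorBasis, eunorm_eq_norm_toLp, WithLp.toLp_smul, norm_smul,
    ← eunorm_eq_norm_toLp, eunorm_eigenvectorBasis, mul_one, Real.norm_eq_abs]

lemma le_specNorm_smul_one (hM : M.IsHermitian) : M ≤ specNorm M • 1 := by
  rw [← Algebra.algebraMap_eq_smul_one, le_algebraMap_iff_spectrum_le hM.isSelfAdjoint,
    hM.spectrum_real_eq_range_eigenvalues, Set.forall_mem_range]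
  intro j
  calc hM.eigenvalues j ≤ eunorm (M *ᵥ hM.eigenvectorBasis j) :=
        (le_abs_self _).trans_eq (eunorm_mulVec_eigenvectorBasis hM j).symm
    _ ≤ specNorm M := eunorm_mulVec_le_specNorm M (eunorm_eigenvectorBasis hM j).le

lemma sigmaMin_smul_one_le (hM : 0 ≤ M) : sigmaMin M • 1 ≤ M := by
  have hM' : M.PosSemidef := nonneg_iff_posSemidef.1 hM
  rw [← Algebra.algebraMap_eq_smul_one,
    algebraMap_le_iff_le_spectrum hM'.isHermitian.isSelfAdjoint,
    hM'.isHermitian.spectrum_real_eq_range_eigenvalues, Set.forall_mem_range]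
  intro j
  calc sigmaMin M ≤ eunorm (M *ᵥ hM'.isHermitian.eigenvectorBasis j) :=
        sigmaMin_le_eunorm_mulVec M (eunorm_eigenvectorBasis _ j)
    _ = hM'.isHermitian.eigenvalues j := by
        rw [eunorm_mulVec_eigenvectorBasis, abs_of_nonneg (hM'.eigenvalues_nonneg j)]

lemma InQbar.nonneg {n : ℕ} {R : Matrix (Fin n) (Fin n) ℝ} (hR : InQbar R) : 0 ≤ R :=
  nonneg_iff_posSemidef.2 hR.1

lemma InQbar.le_one {n : ℕ} {R : Matrix (Fin n) (Fin n) ℝ} (hR : InQbar R) : R ≤ 1 := by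
  refine (le_specNorm_smul_one hR.1.isHermitian).trans ?_
  simpa using smul_le_smul_of_nonneg_right hR.2 (zero_le_one (α := Matrix (Fin n) (Fin n) ℝ))

lemma mul_self_le_self {R : Matrix κ κ ℝ} (h0 : 0 ≤ R) (h1 : R ≤ 1) : R * R ≤ R := by
  have hR : IsSelfAdjoint R := .of_nonneg h0
  have hR' : IsSelfAdjoint (1 - R) := .of_nonneg (sub_nonneg.2 h1)
  rw [← sub_nonneg]
  calc 0 ≤ R * (1 - R) * R + (1 - R) * R * (1 - R) :=
        add_nonneg (hR.conjugate_nonneg (sub_nonneg.2 h1)) (hR'.conjugate_nonneg h0)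
    _ = R - R * R := by noncomm_ring

end Loewner

section Energy

open scoped MatrixOrder Matrix.Norms.Frobenius

variable {ι κ : Type*} [Fintype ι] [Fintype κ]

lemma frobenius_norm_sq (Y : Matrix ι κ ℝ) : ‖Y‖ ^ 2 = trace (Y * Yᵀ) := by
  rw [frobenius_norm_def, ← Real.sqrt_eq_rpow, Real.sq_sqrt (by positivity)]
  simp [trace, mul_apply, sq]

lemma eunorm_row_le_frobenius_norm (Y : Matrix ι κ ℝ) (i : ι) : eunorm (Y i) ≤ ‖Y‖ := by
  rw [eunorm, frobenius_norm_def, ← Real.sqrt_eq_rpow]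
  refine Real.sqrt_le_sqrt ?_
  simpa using Finset.single_le_sum (f := fun i => ∑ j, Y i j ^ 2)
    (fun i _ => by positivity) (Finset.mem_univ i)

/-- The energy `tr (Y R Yᵀ)` of `Y` with respect to the weight `R`: the sum of the values at the
rows of `Y` of the quadratic form of `R`. With `R = Q t` it is the rate at which the array
dissipates; applied to `Yᵀ` it gives the Lyapunov function. -/
def energy (R : Matrix κ κ ℝ) (Y : Matrix ι κ ℝ) : ℝ := trace (Y * R * Yᵀ)

lemma energy_transpose (P : Matrix ι ι ℝ) (Y : Matrix ι κ ℝ) :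
    energy P Yᵀ = trace (P * (Y * Yᵀ)) := by
  rw [energy, transpose_transpose, trace_mul_cycle, trace_mul_cycle, Matrix.mul_assoc]

lemma energy_mono {R S : Matrix κ κ ℝ} (hRS : R ≤ S) (Y : Matrix ι κ ℝ) :
    energy R Y ≤ energy S Y := by
  have h : (Y * (S - R) * Yᵀ).PosSemidef := (le_iff.1 hRS).mul_mul_conjTranspose_same Y
  simpa [energy, Matrix.mul_sub, Matrix.sub_mul] using h.trace_nonneg

lemma energy_nonneg {R : Matrix κ κ ℝ} (hR : 0 ≤ R) (Y : Matrix ι κ ℝ) : 0 ≤ energy R Y := by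
  simpa [energy] using energy_mono hR Y

lemma energy_smul_one [DecidableEq κ] (a : ℝ) (Y : Matrix ι κ ℝ) :
    energy (a • 1) Y = a * ‖Y‖ ^ 2 := by
  simp [energy, frobenius_norm_sq]

lemma mul_norm_sq_le_energy_transpose [DecidableEq ι] {P : Matrix ι ι ℝ} {a : ℝ} (hP : a • 1 ≤ P)
    (Y : Matrix ι κ ℝ) : a * ‖Y‖ ^ 2 ≤ energy P Yᵀ := by
  rw [← frobenius_norm_transpose, ← energy_smul_one]
  exact energy_mono hP _

lemma energy_transpose_le_mul_norm_sq [DecidableEq ι] {P : Matrix ι ι ℝ} {a : ℝ} (hP : P ≤ a • 1)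
    (Y : Matrix ι κ ℝ) : energy P Yᵀ ≤ a * ‖Y‖ ^ 2 := by
  rw [← frobenius_norm_transpose, ← energy_smul_one]
  exact energy_mono hP _

lemma energy_one [DecidableEq κ] (Y : Matrix ι κ ℝ) : energy 1 Y = ‖Y‖ ^ 2 := by
  simpa using energy_smul_one 1 Y

lemma energy_add_add_energy_sub (R : Matrix κ κ ℝ) (Y Z : Matrix ι κ ℝ) :
    energy R (Y + Z) + energy R (Y - Z) = 2 * energy R Y + 2 * energy R Z := by
  simp only [energy, Matrix.add_mul, Matrix.sub_mul, transpose_add, transpose_sub, Matrix.mul_add,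
    Matrix.mul_sub, trace_add, trace_sub]
  ring

lemma energy_le_two_mul_add [DecidableEq κ] {R : Matrix κ κ ℝ} (h0 : 0 ≤ R) (h1 : R ≤ 1)
    (Y Z : Matrix ι κ ℝ) : energy R Y ≤ 2 * energy R Z + 2 * ‖Y - Z‖ ^ 2 :=
  calc energy R Y = energy R (Z + (Y - Z)) := by rw [add_sub_cancel]
    _ ≤ 2 * energy R Z + 2 * energy R (Y - Z) := by
        rw [← energy_add_add_energy_sub]
        exact le_add_of_nonneg_right (energy_nonneg h0 _)
    _ ≤ 2 * energy R Z + 2 * ‖Y - Z‖ ^ 2 := by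
        rw [← energy_one]
        gcongr
        exact energy_mono h1 _

lemma norm_mul_mul_sq_le {l : Type*} [Fintype l] [DecidableEq κ] {R : Matrix κ κ ℝ} (h0 : 0 ≤ R)
    (h1 : R ≤ 1) (Γ : Matrix l ι ℝ) (Y : Matrix ι κ ℝ) :
    ‖Γ * Y * R‖ ^ 2 ≤ ‖Γ‖ ^ 2 * energy R Y := by
  have hR : Rᵀ = R := (nonneg_iff_posSemidef.1 h0).isHermitian
  have hYR : ‖Y * R‖ ^ 2 = energy (R * R) Y := by
    rw [frobenius_norm_sq, energy, transpose_mul, hR]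
    simp only [Matrix.mul_assoc]
  calc ‖Γ * Y * R‖ ^ 2 ≤ (‖Γ‖ * ‖Y * R‖) ^ 2 := by
        rw [Matrix.mul_assoc]
        gcongr
        exact frobenius_norm_mul Γ (Y * R)
    _ = ‖Γ‖ ^ 2 * energy (R * R) Y := by rw [mul_pow, hYR]
    _ ≤ ‖Γ‖ ^ 2 * energy R Y := by
        gcongr
        exact energy_mono (mul_self_le_self h0 h1) Y

end Energy

section Excitation

open scoped MatrixOrder Matrix.Norms.Frobenius

variable {ι κ : Type*} [Fintype ι] [Fintype κ] {Q : ℝ → Matrix κ κ ℝ} {s u : ℝ}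

lemma energy_eq_sum (R : Matrix κ κ ℝ) (Y : Matrix ι κ ℝ) :
    energy R Y = ∑ e : κ × κ, R e.1 e.2 * (Yᵀ * Y) e.2 e.1 := by
  rw [energy, Matrix.mul_assoc, trace_mul_comm, Matrix.mul_assoc, Fintype.sum_prod_type]
  rfl

lemma intervalIntegrable_energy (hQ : ∀ a b, IntervalIntegrable (fun t => Q t a b) volume s u)
    (Y : Matrix ι κ ℝ) : IntervalIntegrable (fun t => energy (Q t) Y) volume s u := by
  simp only [energy_eq_sum]
  simpa only [Finset.sum_fn] using
    IntervalIntegrable.sum Finset.univ fun e _ => (hQ e.1 e.2).mul_const ((Yᵀ * Y) e.2 e.1)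

lemma energy_integral (hQ : ∀ a b, IntervalIntegrable (fun t => Q t a b) volume s u)
    (Y : Matrix ι κ ℝ) :
    energy (of fun a b => ∫ t in s..u, Q t a b) Y = ∫ t in s..u, energy (Q t) Y := by
  simp only [energy_eq_sum, of_apply]
  rw [intervalIntegral.integral_finsetSum fun e _ => (hQ e.1 e.2).mul_const _]
  simp only [intervalIntegral.integral_mul_const]

lemma integral_matrix_nonneg {κ : Type*} [Finite κ] {Q : ℝ → Matrix κ κ ℝ} (hsu : s ≤ u)
    (hQ0 : ∀ t ∈ Set.Icc s u, 0 ≤ Q t)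
    (hQ : ∀ a b, IntervalIntegrable (fun t => Q t a b) volume s u) :
    0 ≤ (of fun a b => ∫ t in s..u, Q t a b : Matrix κ κ ℝ) := by
  cases nonempty_fintype κ
  refine nonneg_iff_posSemidef.2 (.of_dotProduct_mulVec_nonneg ?_ fun v => ?_)
  · ext a b
    refine intervalIntegral.integral_congr fun t ht => ?_
    rw [Set.uIcc_of_le hsu] at ht
    exact (nonneg_iff_posSemidef.1 (hQ0 t ht)).isHermitian.apply a b
  · have hv (R : Matrix κ κ ℝ) : star v ⬝ᵥ R *ᵥ v = energy R (replicateRow Unit v) := by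
      rw [dotProduct_mulVec, star_trivial, energy, ← replicateRow_vecMul, transpose_replicateRow,
        trace_mul_comm, trace_replicateCol_mul_replicateRow, dotProduct_comm]
    rw [hv, energy_integral hQ]
    exact intervalIntegral.integral_nonneg hsu fun t ht => energy_nonneg (hQ0 t ht) _

lemma mul_norm_sq_le_integral_energy {ε : ℝ} (hsu : s ≤ u)
    (hQ0 : ∀ t ∈ Set.Icc s u, 0 ≤ Q t)
    (hQ : ∀ a b, IntervalIntegrable (fun t => Q t a b) volume s u)
    (hε : ε ≤ sigmaMin (of fun a b => ∫ t in s..u, Q t a b : Matrix κ κ ℝ)) (Y : Matrix ι κ ℝ) :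
    ε * ‖Y‖ ^ 2 ≤ ∫ t in s..u, energy (Q t) Y := by
  classical
  rw [← energy_integral hQ]
  calc ε * ‖Y‖ ^ 2 ≤ sigmaMin (of fun a b => ∫ t in s..u, Q t a b : Matrix κ κ ℝ) * ‖Y‖ ^ 2 := by
        gcongr
    _ ≤ energy (of fun a b => ∫ t in s..u, Q t a b) Y := by
        rw [← energy_smul_one]
        exact energy_mono (sigmaMin_smul_one_le (integral_matrix_nonneg hsu hQ0 hQ)) Y

end Excitation

section Calculus

variable {E : Type*} [NormedAddCommGroup E] [NormedSpace ℝ E] {a b C : ℝ}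

lemma sq_norm_sub_le_of_sq_norm_deriv_le {f f' : ℝ → E} {g g' : ℝ → ℝ} (hab : a ≤ b)
    (hf : ∀ s ∈ Set.Icc a b, HasDerivAt f (f' s) s)
    (hg : ∀ s ∈ Set.Icc a b, HasDerivAt g (g' s) s)
    (h : ∀ s ∈ Set.Icc a b, ‖f' s‖ ^ 2 ≤ g' s) :
    ‖f b - f a‖ ^ 2 ≤ (b - a) * (g b - g a) := by
  -- Integrating `0 ≤ (θ - ‖f'‖) ^ 2` for every `θ` replaces the Cauchy–Schwarz inequality for
  -- `∫ ‖f'‖`, and needs no integrability of `f'`.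
  have hθ (θ : ℝ) : 0 ≤ (b - a) * (θ * θ) + (-2 * ‖f b - f a‖) * θ + (g b - g a) := by
    have hd (s : ℝ) (hs : s ∈ Set.Icc a b) :
        HasDerivAt (fun s => (2 * θ) • (f s - f a)) ((2 * θ) • f' s) s :=
      ((hf s hs).sub_const (f a)).const_smul (2 * θ)
    have hB (s : ℝ) (hs : s ∈ Set.Icc a b) :
        HasDerivAt (fun s => θ ^ 2 * (s - a) + (g s - g a)) (θ ^ 2 * 1 + g' s) s :=
      (((hasDerivAt_id s).sub_const a).const_mul (θ ^ 2)).add ((hg s hs).sub_const (g a))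
    have hle : ‖(2 * θ) • (f b - f a)‖ ≤ θ ^ 2 * (b - a) + (g b - g a) := by
      refine image_norm_le_of_norm_deriv_right_le_deriv_boundary'
        (f := fun s => (2 * θ) • (f s - f a))
        (fun s hs => (hd s hs).continuousAt.continuousWithinAt)
        (fun s hs => (hd s (Set.Ico_subset_Icc_self hs)).hasDerivWithinAt) (by simp)
        (fun s hs => (hB s hs).continuousAt.continuousWithinAt)
        (fun s hs => (hB s (Set.Ico_subset_Icc_self hs)).hasDerivWithinAt) (fun s hs => ?_)
        (Set.right_mem_Icc.2 hab)
      have hs' := h s (Set.Ico_subset_Icc_self hs)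
      rw [norm_smul, norm_mul, Real.norm_ofNat, Real.norm_eq_abs]
      nlinarith [sq_nonneg (|θ| - ‖f' s‖), sq_abs θ]
    rw [norm_smul, norm_mul, Real.norm_ofNat, Real.norm_eq_abs] at hle
    nlinarith [le_abs_self θ, norm_nonneg (f b - f a)]
  have hdiscrim := discrim_le_zero hθ
  rw [discrim] at hdiscrim
  linarith

lemma antitoneOn_of_hasDerivAt_nonpos {s : Set ℝ} (hs : Convex ℝ s) {V V' : ℝ → ℝ}
    (hV : ∀ t ∈ s, HasDerivAt V (V' t) t) (hV' : ∀ t ∈ s, V' t ≤ 0) : AntitoneOn V s :=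
  antitoneOn_of_hasDerivWithinAt_nonpos hs (fun t ht => (hV t ht).continuousAt.continuousWithinAt)
    (fun t ht => (hV t (interior_subset ht)).hasDerivWithinAt)
    fun t ht => hV' t (interior_subset ht)

section Dissipation

variable {y y' : ℝ → E} {V V' : ℝ → ℝ}

lemma sq_norm_sub_le_of_dissipation (hC : 0 ≤ C)
    (hy : ∀ s ∈ Set.Icc a b, HasDerivAt y (y' s) s)
    (hV : ∀ s ∈ Set.Icc a b, HasDerivAt V (V' s) s)
    (hV' : ∀ s ∈ Set.Icc a b, V' s ≤ 0) (h : ∀ s ∈ Set.Icc a b, ‖y' s‖ ^ 2 ≤ C * -V' s)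
    {s : ℝ} (hs : s ∈ Set.Icc a b) : ‖y s - y a‖ ^ 2 ≤ C * (b - a) * (V a - V b) := by
  have hsub : Set.Icc a s ⊆ Set.Icc a b := Set.Icc_subset_Icc_right hs.2
  have hab : a ≤ b := hs.1.trans hs.2
  have hanti : AntitoneOn V (Set.Icc a b) :=
    antitoneOn_of_hasDerivAt_nonpos (convex_Icc a b) hV hV'
  have has : V s ≤ V a := hanti (Set.left_mem_Icc.2 hab) hs hs.1
  have hsb : V b ≤ V s := hanti hs (Set.right_mem_Icc.2 hab) hs.2
  calc ‖y s - y a‖ ^ 2 ≤ (s - a) * (C * -V s - C * -V a) :=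
        sq_norm_sub_le_of_sq_norm_deriv_le hs.1 (fun u hu => hy u (hsub hu))
          (fun u hu => (hV u (hsub hu)).neg.const_mul C) fun u hu => h u (hsub hu)
    _ = C * (s - a) * (V a - V s) := by ring
    _ ≤ C * (b - a) * (V a - V b) := by
        gcongr
        exact hs.2

lemma integral_le_mul_sub_of_dissipation {q : ℝ → E → ℝ} (hab : a ≤ b) (hC : 0 ≤ C)
    (hq : ∀ s ∈ Set.Icc a b, ∀ u w, q s u ≤ 2 * q s w + 2 * ‖u - w‖ ^ 2)
    (hqint : IntervalIntegrable (fun s => q s (y a)) volume a b)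
    (hy : ∀ s ∈ Set.Icc a b, HasDerivAt y (y' s) s)
    (hV : ∀ s ∈ Set.Icc a b, HasDerivAt V (V' s) s)
    (hy' : ∀ s ∈ Set.Icc a b, ‖y' s‖ ^ 2 ≤ C * q s (y s))
    (hV' : ∀ s ∈ Set.Icc a b, V' s ≤ -q s (y s)) :
    ∫ s in a..b, q s (y a) ≤ 2 * (1 + C * (b - a) ^ 2) * (V a - V b) := by
  have hq0 (s : ℝ) (hs : s ∈ Set.Icc a b) : 0 ≤ q s (y s) := by
    simpa [two_mul] using hq s hs (y s) (y s)
  set D := C * (b - a) * (V a - V b) with hD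
  have hdisp (s : ℝ) (hs : s ∈ Set.Icc a b) : ‖y s - y a‖ ^ 2 ≤ D :=
    sq_norm_sub_le_of_dissipation hC hy hV
      (fun u hu => (hV' u hu).trans (neg_nonpos.2 (hq0 u hu)))
      (fun u hu => (hy' u hu).trans (mul_le_mul_of_nonneg_left (le_neg.2 (hV' u hu)) hC)) hs
  have hB (s : ℝ) (hs : s ∈ Set.Icc a b) :
      HasDerivAt (fun s => -2 * V s + 2 * D * s) (-2 * V' s + 2 * D * 1) s :=
    ((hV s hs).const_mul _).add ((hasDerivAt_id s).const_mul _)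
  calc ∫ s in a..b, q s (y a) ≤ (-2 * V b + 2 * D * b) - (-2 * V a + 2 * D * a) := by
        refine intervalIntegral.integral_le_sub_of_hasDeriv_right_of_le hab
          (fun s hs => (hB s hs).continuousAt.continuousWithinAt)
          (fun s hs => (hB s (Set.Ioo_subset_Icc_self hs)).hasDerivWithinAt)
          ((intervalIntegrable_iff_integrableOn_Icc_of_le hab).1 hqint) fun s hs => ?_
        have hs := Set.Ioo_subset_Icc_self hs
        have hqy := hq s hs (y a) (y s)
        rw [norm_sub_rev] at hqy
        linarith [hV' s hs, hdisp s hs]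
    _ = 2 * (1 + C * (b - a) ^ 2) * (V a - V b) := by rw [hD]; ring

end Dissipation

lemma pow_floor_mul_le_of_forall_mul_le {V : ℝ → ℝ} {T ρ : ℝ} (hT : 0 < T) (hρ : 0 ≤ ρ)
    (hV : AntitoneOn V (Set.Ici 0)) (hstep : ∀ t, 0 ≤ t → ρ * V (t + T) ≤ V t) {t : ℝ}
    (ht : 0 ≤ t) : ρ ^ ⌊t / T⌋₊ * V t ≤ V 0 := by
  have hpow (k : ℕ) : ρ ^ k * V (k * T) ≤ V 0 := by
    induction k with
    | zero => simp
    | succ k ih =>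
      calc ρ ^ (k + 1) * V ((k + 1 : ℕ) * T) = ρ ^ k * (ρ * V (k * T + T)) := by
            push_cast; ring_nf
        _ ≤ ρ ^ k * V (k * T) := by gcongr; exact hstep _ (by positivity)
        _ ≤ V 0 := ih
  have hfloor : (⌊t / T⌋₊ : ℝ) * T ≤ t := (le_div_iff₀ hT).1 (Nat.floor_le (by positivity))
  calc ρ ^ ⌊t / T⌋₊ * V t ≤ ρ ^ ⌊t / T⌋₊ * V (⌊t / T⌋₊ * T) := by
        gcongr
        exact hV (Set.mem_Ici.2 (by positivity)) (Set.mem_Ici.2 ht) hfloor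
    _ ≤ V 0 := hpow _

lemma exp_log_div_mul_le_pow_floor {T ρ : ℝ} (hρ : 1 ≤ ρ) (t : ℝ) :
    Real.exp (Real.log ρ / T * t) ≤ ρ ^ (⌊t / T⌋₊ + 1) := by
  rw [← Real.exp_log (show 0 < ρ ^ (⌊t / T⌋₊ + 1) by positivity), Real.log_pow, Real.exp_le_exp,
    div_mul_comm]
  gcongr
  · exact Real.log_nonneg hρ
  · exact_mod_cast (Nat.lt_floor_add_one (t / T)).le

lemma le_mul_exp_of_forall_mul_le {V : ℝ → ℝ} {T ρ : ℝ} (hT : 0 < T) (hρ : 1 ≤ ρ)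
    (hV0 : ∀ t, 0 ≤ t → 0 ≤ V t) (hV : AntitoneOn V (Set.Ici 0))
    (hstep : ∀ t, 0 ≤ t → ρ * V (t + T) ≤ V t) {t : ℝ} (ht : 0 ≤ t) :
    V t ≤ ρ * V 0 * Real.exp (-(Real.log ρ / T * t)) := by
  rw [Real.exp_neg, ← div_eq_mul_inv, le_div_iff₀ (Real.exp_pos _)]
  calc V t * Real.exp (Real.log ρ / T * t) ≤ V t * ρ ^ (⌊t / T⌋₊ + 1) := by
        gcongr
        exacts [hV0 t ht, exp_log_div_mul_le_pow_floor hρ t]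
    _ = ρ * (ρ ^ ⌊t / T⌋₊ * V t) := by ring
    _ ≤ ρ * V 0 := by
        gcongr
        exact pow_floor_mul_le_of_forall_mul_le hT (by linarith) hV hstep ht

lemma hasDerivAt_matrix {m n : Type*} [Finite m] [Finite n] {Y : ℝ → Matrix m n ℝ}
    {Y' : Matrix m n ℝ} {t : ℝ} :
    HasDerivAt Y Y' t ↔ ∀ i a, HasDerivAt (fun s => Y s i a) (Y' i a) t := by
  cases nonempty_fintype m
  cases nonempty_fintype n
  exact hasDerivAt_pi.trans (forall_congr' fun _ => hasDerivAt_pi)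

end Calculus

section Stochastic

lemma pow_eq_add_one_sub_mul_pow {R : Type*} [Ring R] {a b e : R} (hae : a * e = e)
    (hea : e * a = e) (hab : (1 - e) * a = (1 - e) * b) (k : ℕ) :
    a ^ k = e + (1 - e) * b ^ k := by
  have hpow (k : ℕ) : a ^ k * e = e := by
    induction k with
    | zero => simp
    | succ k ih => rw [pow_succ, mul_assoc, hae, ih]
  induction k with
  | zero => simp
  | succ k ih =>
    calc a ^ (k + 1) = e * a + a ^ k * ((1 - e) * a) := by
          rw [← mul_assoc, mul_sub, hpow, mul_one, sub_mul, ← pow_succ, add_sub_cancel]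
      _ = e + (a ^ k - e) * b := by rw [hea, hab, ← mul_assoc, mul_sub, hpow, mul_one]
      _ = e + (1 - e) * b ^ (k + 1) := by rw [ih, add_sub_cancel_left, mul_assoc, pow_succ]

variable {ι : Type*} [Fintype ι] [DecidableEq ι]

open scoped Matrix.Norms.Operator in
lemma tendsto_pow_zero_of_sum_row_lt_one {C : Matrix ι ι ℝ} (hC : ∀ i j, 0 ≤ C i j)
    (hrow : ∀ i, ∑ j, C i j < 1) : Tendsto (C ^ ·) atTop (nhds 0) := by
  refine tendsto_pow_atTop_nhds_zero_of_norm_lt_one ?_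
  rw [linfty_opNorm_def, NNReal.coe_lt_one, Finset.sup_lt_iff zero_lt_one]
  intro i _
  rw [← NNReal.coe_lt_one, NNReal.coe_sum]
  simpa only [coe_nnnorm, Real.norm_of_nonneg (hC i _)] using hrow i

-- Doeblin's argument: subtracting a constant from a positive column of `D` leaves a strictly
-- substochastic matrix `C`, and `D` and `C` agree modulo the range of `vecMulVec 1 r`.
lemma tendsto_pow_of_mem_rowStochastic {D : Matrix ι ι ℝ} (hD : D ∈ rowStochastic ℝ ι) {v : ι}
    (hv : ∀ i, 0 < D i v) {r : ι → ℝ} (hrD : r ᵥ* D = r) (hr : ∑ i, r i = 1) :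
    Tendsto (D ^ ·) atTop (nhds (vecMulVec 1 r)) := by
  obtain ⟨w, -, hw⟩ := Finset.exists_min_image Finset.univ (D · v) ⟨v, Finset.mem_univ v⟩
  set C := D - D w v • vecMulVec 1 (Pi.single v 1) with hCdef
  have hC : Tendsto (C ^ ·) atTop (nhds 0) := by
    refine tendsto_pow_zero_of_sum_row_lt_one (fun i j => ?_) fun i => ?_
    · rcases eq_or_ne j v with rfl | hj
      · simpa [hCdef, vecMulVec_apply] using hw i (Finset.mem_univ i)
      · simpa [hCdef, vecMulVec_apply, hj] using nonneg_of_mem_rowStochastic hD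
    · simpa [hCdef, vecMulVec_apply, Finset.sum_sub_distrib, ← Finset.mul_sum,
        sum_row_of_mem_rowStochastic hD i] using hv w
  set e : Matrix ι ι ℝ := vecMulVec 1 r with he
  have hDC : (1 - e) * D = (1 - e) * C := by
    have hone : e * vecMulVec 1 (Pi.single v (1 : ℝ)) = vecMulVec 1 (Pi.single v 1) := by
      rw [he, vecMulVec_mul_vecMulVec]
      simp [dotProduct, hr]
    rw [hCdef, Matrix.mul_sub, Matrix.mul_smul, Matrix.sub_mul 1 e (vecMulVec _ _), hone,
      Matrix.one_mul, sub_self, smul_zero, sub_zero]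
  have hDe : D * e = e := by rw [he, mul_vecMulVec, one_vecMul_of_mem_rowStochastic hD]
  have heD : e * D = e := by rw [he, vecMulVec_mul, hrD]
  simp only [pow_eq_add_one_sub_mul_pow hDe heD hDC]
  simpa using (hC.const_mul (1 - e)).const_add e

lemma exists_pow_col_pos {A : Matrix ι ι ℝ} (hA : A ∈ rowStochastic ℝ ι) (hd : ∀ i, 0 < A i i)
    {v : ι} (hv : ∀ u, Relation.ReflTransGen (fun i j => 0 < A i j) u v) :
    ∃ m, 0 < m ∧ ∀ u, 0 < (A ^ m) u v := by
  have hstep (k : ℕ) (u w : ι) (huw : 0 < A u w) (hwv : 0 < (A ^ k) w v) :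
      0 < (A ^ (k + 1)) u v := by
    rw [pow_succ', mul_apply]
    exact (mul_pos huw hwv).trans_le <| Finset.single_le_sum (f := fun j => A u j * (A ^ k) j v)
      (fun j _ => mul_nonneg (nonneg_of_mem_rowStochastic hA)
        (nonneg_of_mem_rowStochastic (pow_mem hA k))) (Finset.mem_univ w)
  have hex (u : ι) : ∃ k, 0 < (A ^ k) u v := by
    induction hv u using Relation.ReflTransGen.head_induction_on with
    | refl => exact ⟨0, by simp⟩
    | head huw _ ih => exact ⟨_, hstep _ _ _ huw ih.choose_spec⟩
  choose k hk using hex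
  have hmono (u : ι) (m : ℕ) (hm : k u ≤ m) : 0 < (A ^ m) u v :=
    Nat.le_induction (hk u) (fun m _ hm => hstep m u u (hd u) hm) m hm
  refine ⟨∑ u, k u + 1, Nat.succ_pos _, fun u => hmono u _ (Nat.le_succ_of_le ?_)⟩
  exact Finset.single_le_sum (f := k) (fun _ _ => Nat.zero_le _) (Finset.mem_univ u)

open scoped Matrix.Norms.Frobenius in
lemma exists_norm_pow_sub_sq_le {A : Matrix ι ι ℝ} (hA : A ∈ rowStochastic ℝ ι)
    (hd : ∀ i, 0 < A i i) {v : ι} (hv : ∀ u, Relation.ReflTransGen (fun i j => 0 < A i j) u v)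
    {r : ι → ℝ} (hrA : r ᵥ* A = r) (hr : ∑ i, r i = 1) {δ : ℝ} (hδ : 0 < δ) :
    ∃ N, 0 < N ∧ ‖A ^ N - vecMulVec 1 r‖ ^ 2 ≤ δ := by
  obtain ⟨m, hm, hmv⟩ := exists_pow_col_pos hA hd hv
  have hrAm : r ᵥ* A ^ m = r := by
    clear hm hmv
    induction m with
    | zero => simp
    | succ m ih => rw [pow_succ, ← vecMul_vecMul, ih, hrA]
  have hlim := ((tendsto_pow_of_mem_rowStochastic (pow_mem hA m) hmv hrAm hr).sub_const
    (vecMulVec 1 r)).norm.pow 2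
  rw [sub_self, norm_zero, zero_pow two_ne_zero] at hlim
  obtain ⟨k, hk, hk0⟩ := ((hlim.eventually_le_const hδ).and (eventually_gt_atTop 0)).exists
  exact ⟨m * k, Nat.mul_pos hm hk0, by rwa [pow_mul]⟩

end Stochastic

section Interconnection

variable {p : ℕ} {Γ : Matrix (Fin p) (Fin p) ℝ}

lemma IsInterconnection.sum_row_eq_zero (hΓ : IsInterconnection Γ) (i : Fin p) :
    ∑ j, Γ i j = 0 := by
  rw [← Finset.add_sum_erase _ _ (Finset.mem_univ i), hΓ.2 i, Finset.filter_ne', neg_add_cancel]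

lemma IsInterconnection.exists_one_add_smul_mem_rowStochastic (hΓ : IsInterconnection Γ) :
    ∃ h : ℝ, 0 < h ∧ 1 + h • Γ ∈ rowStochastic ℝ (Fin p) ∧ ∀ i, 0 < (1 + h • Γ) i i := by
  set h : ℝ := (1 + ∑ i, |Γ i i|)⁻¹ with hdef
  have hpos : 0 < 1 + ∑ i, |Γ i i| := by positivity
  have hh : 0 < h := inv_pos.2 hpos
  have hdiag (i : Fin p) : 0 < (1 + h • Γ) i i := by
    have hi : h * |Γ i i| < 1 := by
      rw [hdef, inv_mul_lt_one₀ hpos]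
      exact (lt_one_add _).trans_le' <| Finset.single_le_sum (f := fun i => |Γ i i|)
        (fun j _ => abs_nonneg _) (Finset.mem_univ i)
    have habs := mul_le_mul_of_nonneg_left (neg_abs_le (Γ i i)) hh.le
    simp only [Matrix.add_apply, one_apply_eq, Matrix.smul_apply, smul_eq_mul]
    linarith
  refine ⟨h, hh, mem_rowStochastic_iff_sum.2 ⟨fun i j => ?_, fun i => ?_⟩, hdiag⟩
  · rcases eq_or_ne i j with rfl | hij
    · exact (hdiag i).le
    · simpa [one_apply_ne hij] using mul_nonneg hh.le (hΓ.1 i j hij)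
  · simp [Finset.sum_add_distrib, ← Finset.mul_sum, hΓ.sum_row_eq_zero, one_apply]

lemma reflTransGen_one_add_smul {h : ℝ} (hh : 0 < h) (hdiag : ∀ i, 0 < (1 + h • Γ) i i)
    {u v : Fin p} (huv : Relation.ReflTransGen (fun i j => 0 < Γ i j) u v) :
    Relation.ReflTransGen (fun i j => 0 < (1 + h • Γ) i j) u v := by
  refine Relation.ReflTransGen.mono (fun i j hij => ?_) _ _ huv
  rcases eq_or_ne i j with rfl | hne
  · exact hdiag i
  · simpa [one_apply_ne hne] using mul_pos hh hij

end Interconnection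

section Lyapunov

open scoped MatrixOrder Matrix.Norms.Frobenius

variable {ι κ : Type*} [Fintype ι] [Fintype κ]

lemma exists_eq_mul_transpose_of_nonneg {G : Matrix ι ι ℝ} (hG : 0 ≤ G) {r : ι → ℝ}
    (hr : r ᵥ* G = 0) : ∃ Z : Matrix ι ι ℝ, G = Z * Zᵀ ∧ r ᵥ* Z = 0 := by
  classical
  obtain ⟨B, rfl⟩ := CStarAlgebra.nonneg_iff_eq_star_mul_self.1 hG
  exact ⟨Bᵀ, by simp [star_eq_conjTranspose], by
    simpa [star_eq_conjTranspose] using (vecMul_conjTranspose_mul_self_eq_zero B r).1 hr⟩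

lemma norm_mul_sq_le_of_vecMul_eq_zero {r : ι → ℝ} {Z : Matrix ι κ ℝ} (hr : r ᵥ* Z = 0)
    (B : Matrix ι ι ℝ) : ‖B * Z‖ ^ 2 ≤ ‖B - vecMulVec 1 r‖ ^ 2 * ‖Z‖ ^ 2 := by
  have hBZ : B * Z = (B - vecMulVec 1 r) * Z := by
    rw [Matrix.sub_mul, vecMulVec_mul, hr]
    simp
  rw [hBZ, ← mul_pow]
  gcongr
  exact frobenius_norm_mul _ Z

variable [DecidableEq ι]

/-- The finite-horizon observability Gramian of the discrete-time system `x ↦ A x` with full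
output: a solution of the Lyapunov equation `transpose_mul_gramian_mul_sub`. -/
def gramian (A : Matrix ι ι ℝ) (N : ℕ) : Matrix ι ι ℝ := ∑ k ∈ Finset.range N, (A ^ k)ᵀ * A ^ k

lemma transpose_mul_gramian_mul_sub (A : Matrix ι ι ℝ) (N : ℕ) :
    Aᵀ * gramian A N * A - gramian A N = (A ^ N)ᵀ * A ^ N - 1 := by
  have hstep (k : ℕ) : Aᵀ * ((A ^ k)ᵀ * A ^ k) * A = (A ^ (k + 1))ᵀ * A ^ (k + 1) := by
    rw [pow_succ, transpose_mul]
    simp only [Matrix.mul_assoc]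
  rw [gramian, Matrix.mul_sum, Matrix.sum_mul, ← Finset.sum_sub_distrib]
  simp only [hstep]
  rw [Finset.sum_range_sub (fun k => (A ^ k)ᵀ * A ^ k), pow_zero, transpose_one, Matrix.one_mul]

lemma one_le_gramian (A : Matrix ι ι ℝ) {N : ℕ} (hN : 0 < N) : 1 ≤ gramian A N := by
  simpa [gramian] using Finset.single_le_sum (f := fun k => (A ^ k)ᵀ * A ^ k)
    (fun k _ => nonneg_iff_posSemidef.2 (posSemidef_conjTranspose_mul_self (A ^ k)))
    (Finset.mem_range.2 hN)

/-- `P` defines a quadratic Lyapunov function for `ẋ = Γ x` on the hyperplane `r ⬝ᵥ x = 0`. The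
strict decrease is tested against all positive semidefinite `G` rather than only `G = x xᵀ`, so that
it applies directly to `G = Y (Q t) Yᵀ`. -/
structure IsLyapunov (Γ : Matrix ι ι ℝ) (r : ι → ℝ) (η : ℝ) (P : Matrix ι ι ℝ) : Prop where
  smul_one_le : η • 1 ≤ P
  trace_mul_le : ∀ G, 0 ≤ G → r ᵥ* G = 0 → trace ((Γᵀ * P + P * Γ) * G) ≤ -trace G

lemma mul_trace_gramian_eq (Γ : Matrix ι ι ℝ) (h : ℝ) (N : ℕ) (Z : Matrix ι κ ℝ) :
    h * trace ((Γᵀ * gramian (1 + h • Γ) N + gramian (1 + h • Γ) N * Γ) * (Z * Zᵀ)) =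
      ‖(1 + h • Γ) ^ N * Z‖ ^ 2 - ‖Z‖ ^ 2 - h ^ 2 * energy (gramian (1 + h • Γ) N) (Γ * Z)ᵀ := by
  set A := 1 + h • Γ with hA
  set P := gramian A N
  have hdiff : h • (Γᵀ * P + P * Γ) = (A ^ N)ᵀ * A ^ N - 1 - h ^ 2 • (Γᵀ * P * Γ) := by
    rw [← transpose_mul_gramian_mul_sub, hA]
    simp only [transpose_add, transpose_one, transpose_smul, Matrix.add_mul, Matrix.mul_add,
      Matrix.one_mul, Matrix.mul_one, Matrix.smul_mul, Matrix.mul_smul, P, hA]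
    module
  have hnorm : trace ((A ^ N)ᵀ * A ^ N * (Z * Zᵀ)) = ‖A ^ N * Z‖ ^ 2 := by
    rw [← energy_transpose, frobenius_norm_sq, trace_mul_comm, energy]
    simp only [transpose_mul, transpose_transpose, Matrix.mul_assoc]
  have henergy : trace (Γᵀ * P * Γ * (Z * Zᵀ)) = energy P (Γ * Z)ᵀ := by
    rw [← energy_transpose, energy, energy]
    simp only [transpose_mul, transpose_transpose, Matrix.mul_assoc]
  rw [← smul_eq_mul, ← trace_smul, ← Matrix.smul_mul, hdiff, Matrix.sub_mul, Matrix.sub_mul,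
    trace_sub, trace_sub, Matrix.smul_mul, trace_smul, smul_eq_mul, hnorm, henergy,
    Matrix.one_mul, ← frobenius_norm_sq]

lemma isLyapunov_gramian {Γ : Matrix ι ι ℝ} {r : ι → ℝ} {h : ℝ} (hh : 0 < h) {N : ℕ} (hN : 0 < N)
    (hconv : ‖(1 + h • Γ) ^ N - vecMulVec 1 r‖ ^ 2 ≤ 1 / 2) :
    IsLyapunov Γ r (2 * h) ((2 * h) • gramian (1 + h • Γ) N) where
  smul_one_le := smul_le_smul_of_nonneg_left (one_le_gramian _ hN) (by positivity)
  trace_mul_le G hG hrG := by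
    obtain ⟨Z, rfl, hrZ⟩ := exists_eq_mul_transpose_of_nonneg hG hrG
    have hpow : ‖(1 + h • Γ) ^ N * Z‖ ^ 2 ≤ 1 / 2 * ‖Z‖ ^ 2 :=
      (norm_mul_sq_le_of_vecMul_eq_zero hrZ _).trans (by gcongr)
    have henergy : 0 ≤ energy (gramian (1 + h • Γ) N) (Γ * Z)ᵀ :=
      energy_nonneg (zero_le_one.trans (one_le_gramian _ hN)) _
    rw [← frobenius_norm_sq, Matrix.mul_smul, Matrix.smul_mul, ← smul_add, Matrix.smul_mul,
      trace_smul, smul_eq_mul, mul_assoc, mul_trace_gramian_eq]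
    linarith [mul_nonneg (sq_nonneg h) henergy]

theorem IsInterconnection.exists_isLyapunov {p : ℕ} {Γ : Matrix (Fin p) (Fin p) ℝ}
    (hΓ : IsInterconnection Γ) (hconn : ConnectedMat Γ) {r : Fin p → ℝ} (hrΓ : r ᵥ* Γ = 0)
    (hr : ∑ i, r i = 1) : ∃ η > 0, ∃ P, IsLyapunov Γ r η P := by
  obtain ⟨h, hh, hA, hdiag⟩ := hΓ.exists_one_add_smul_mem_rowStochastic
  obtain ⟨v, hv⟩ := hconn
  have hrA : r ᵥ* (1 + h • Γ) = r := by simp [vecMul_add, vecMul_smul, hrΓ]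
  obtain ⟨N, hN, hconv⟩ := exists_norm_pow_sub_sq_le hA hdiag
    (fun u => reflTransGen_one_add_smul hh hdiag (hv u)) hrA hr one_half_pos
  exact ⟨2 * h, by positivity, _, isLyapunov_gramian hh hN hconv⟩

end Lyapunov

section Flow

open scoped MatrixOrder Matrix.Norms.Frobenius

variable {ι κ : Type*} [Fintype ι] [Fintype κ] {Γ P : Matrix ι ι ℝ} {r : ι → ℝ}
  {η : ℝ} {Q : ℝ → Matrix κ κ ℝ} {Y : ℝ → Matrix ι κ ℝ} {t : ℝ}

/-- The array dynamics `ẋ i = Q t (∑ j, Γ i j (x j - x i))` in matrix form, the state of the `i`-th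
system being the `i`-th row of `Y`. The matrix `Q t` acts from the right because it is symmetric. -/
def IsArrayFlow (Γ : Matrix ι ι ℝ) (Q : ℝ → Matrix κ κ ℝ) (Y : ℝ → Matrix ι κ ℝ) : Prop :=
  ∀ t, 0 ≤ t → HasDerivAt Y (Γ * Y t * Q t) t

lemma IsArrayFlow.vecMul_eq_zero (hY : IsArrayFlow Γ Q Y) (hr : r ᵥ* Γ = 0) (h0 : r ᵥ* Y 0 = 0)
    (ht : 0 ≤ t) : r ᵥ* Y t = 0 := by
  have hd (s : ℝ) (hs : 0 ≤ s) : HasDerivAt (fun s => r ᵥ* Y s) 0 s := by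
    have hr0 : r ᵥ* (Γ * Y s * Q s) = 0 := by
      rw [Matrix.mul_assoc, ← vecMul_vecMul, hr, zero_vecMul]
    rw [← hr0]
    exact hasDerivAt_pi.2 fun a => HasDerivAt.fun_sum fun i _ =>
      (hasDerivAt_matrix.1 (hY s hs) i a).const_mul (r i)
  rw [← h0]
  exact constant_of_has_deriv_right_zero (b := t)
    (fun s hs => (hd s hs.1).continuousAt.continuousWithinAt)
    (fun s hs => (hd s hs.1).hasDerivWithinAt) t (Set.right_mem_Icc.2 ht)

lemma hasDerivAt_energy_transpose (P : Matrix ι ι ℝ) {Y' : Matrix ι κ ℝ} (hY : HasDerivAt Y Y' t) :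
    HasDerivAt (fun s => energy P (Y s)ᵀ) (trace (Y'ᵀ * P * Y t + (Y t)ᵀ * P * Y')) t := by
  have hY := hasDerivAt_matrix.1 hY
  simp only [energy, transpose_transpose, trace, diag_apply, Matrix.add_apply, mul_apply,
    transpose_apply, ← Finset.sum_add_distrib]
  exact HasDerivAt.fun_sum fun a _ => HasDerivAt.fun_sum fun i _ =>
    (HasDerivAt.fun_sum fun j _ => (hY j a).mul_const (P j i)).mul (hY i a)

variable [DecidableEq ι]

lemma IsLyapunov.trace_deriv_le (hP : IsLyapunov Γ r η P) {R : Matrix κ κ ℝ} (hR : 0 ≤ R)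
    {Y : Matrix ι κ ℝ} (hY : r ᵥ* Y = 0) :
    trace ((Γ * Y * R)ᵀ * P * Y + Yᵀ * P * (Γ * Y * R)) ≤ -energy R Y := by
  have hRt : Rᵀ = R := (nonneg_iff_posSemidef.1 hR).isHermitian
  have hG : 0 ≤ Y * R * Yᵀ :=
    nonneg_iff_posSemidef.2 ((nonneg_iff_posSemidef.1 hR).mul_mul_conjTranspose_same Y)
  have hrG : r ᵥ* (Y * R * Yᵀ) = 0 := by
    simp only [← vecMul_vecMul, hY, zero_vecMul]
  refine le_of_eq_of_le ?_ (hP.trace_mul_le _ hG hrG)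
  rw [Matrix.add_mul, trace_add, trace_add, trace_mul_comm (Γᵀ * P), Matrix.mul_assoc Yᵀ,
    trace_mul_comm Yᵀ]
  simp only [transpose_mul, hRt, Matrix.mul_assoc]
  rw [trace_mul_comm Y]
  simp only [Matrix.mul_assoc]

lemma IsLyapunov.antitoneOn_energy (hP : IsLyapunov Γ r η P) (hQ0 : ∀ t, 0 ≤ t → 0 ≤ Q t)
    (hY : IsArrayFlow Γ Q Y) (hrY : ∀ t, 0 ≤ t → r ᵥ* Y t = 0) :
    AntitoneOn (fun t => energy P (Y t)ᵀ) (Set.Ici 0) :=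
  antitoneOn_of_hasDerivAt_nonpos (convex_Ici 0)
    (fun t ht => hasDerivAt_energy_transpose P (hY t ht)) fun t ht =>
      (hP.trace_deriv_le (hQ0 t ht) (hrY t ht)).trans (neg_nonpos.2 (energy_nonneg (hQ0 t ht) _))

lemma IsLyapunov.mul_norm_sq_le [DecidableEq κ] (hP : IsLyapunov Γ r η P)
    (hQ0 : ∀ t, 0 ≤ t → 0 ≤ Q t) (hQ1 : ∀ t, 0 ≤ t → Q t ≤ 1)
    (hQint : ∀ a b s u, IntervalIntegrable (fun t => Q t a b) volume s u)
    (hY : IsArrayFlow Γ Q Y) (hrY : ∀ t, 0 ≤ t → r ᵥ* Y t = 0) {ε T : ℝ} (hT : 0 ≤ T) (ht : 0 ≤ t)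
    (hε : ε ≤ sigmaMin (of fun a b => ∫ s in t..(t + T), Q s a b)) :
    ε * ‖Y t‖ ^ 2 ≤
      2 * (1 + ‖Γ‖ ^ 2 * T ^ 2) * (energy P (Y t)ᵀ - energy P (Y (t + T))ᵀ) := by
  have htT : t ≤ t + T := by linarith
  have hpos (s : ℝ) (hs : s ∈ Set.Icc t (t + T)) : 0 ≤ s := ht.trans hs.1
  calc ε * ‖Y t‖ ^ 2 ≤ ∫ s in t..(t + T), energy (Q s) (Y t) :=
        mul_norm_sq_le_integral_energy htT (fun s hs => hQ0 s (hpos s hs))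
          (fun a b => hQint a b _ _) hε (Y t)
    _ ≤ 2 * (1 + ‖Γ‖ ^ 2 * (t + T - t) ^ 2) * (energy P (Y t)ᵀ - energy P (Y (t + T))ᵀ) :=
        integral_le_mul_sub_of_dissipation (q := fun s => energy (Q s)) (y := Y)
          (V := fun s => energy P (Y s)ᵀ) htT (sq_nonneg ‖Γ‖)
          (fun s hs => energy_le_two_mul_add (hQ0 s (hpos s hs)) (hQ1 s (hpos s hs)))
          (intervalIntegrable_energy (fun a b => hQint a b _ _) (Y t))
          (fun s hs => hY s (hpos s hs))
          (fun s hs => hasDerivAt_energy_transpose P (hY s (hpos s hs)))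
          (fun s hs => norm_mul_mul_sq_le (hQ0 s (hpos s hs)) (hQ1 s (hpos s hs)) Γ (Y s))
          fun s hs => hP.trace_deriv_le (hQ0 s (hpos s hs)) (hrY s (hpos s hs))
    _ = 2 * (1 + ‖Γ‖ ^ 2 * T ^ 2) * (energy P (Y t)ᵀ - energy P (Y (t + T))ᵀ) := by
        rw [add_sub_cancel_left]

lemma one_add_mul_le_of_mul_le_mul_sub {ε L D N V W : ℝ} (hε : 0 < ε) (hL : 0 < L) (hD : 0 < D)
    (hWV : W ≤ V) (hVN : V ≤ L * N) (hN : ε * N ≤ D * (V - W)) : (1 + ε / (L * D)) * W ≤ V := by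
  have h : ε / (L * D) * V ≤ V - W := by
    rw [div_mul_eq_mul_div, div_le_iff₀ (by positivity)]
    calc ε * V ≤ ε * (L * N) := by gcongr
      _ = L * (ε * N) := by ring
      _ ≤ L * (D * (V - W)) := by gcongr
      _ = (V - W) * (L * D) := by ring
  have hW : ε / (L * D) * W ≤ ε / (L * D) * V := by gcongr
  linarith

lemma exists_le_smul_one {ι : Type*} [Finite ι] [DecidableEq ι] {P : Matrix ι ι ℝ}
    (hP : P.IsHermitian) : ∃ L > (0 : ℝ), P ≤ L • 1 := by
  cases nonempty_fintype ι
  exact ⟨max (specNorm P) 1, by positivity, (le_specNorm_smul_one hP).trans <|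
    smul_le_smul_of_nonneg_right (le_max_left _ _) zero_le_one⟩

theorem IsLyapunov.exists_norm_le_mul_exp [DecidableEq κ] (hP : IsLyapunov Γ r η P) (hη : 0 < η)
    (hrΓ : r ᵥ* Γ = 0) (hQ0 : ∀ t, 0 ≤ t → 0 ≤ Q t) (hQ1 : ∀ t, 0 ≤ t → Q t ≤ 1)
    (hQint : ∀ a b s u, IntervalIntegrable (fun t => Q t a b) volume s u) {ε T : ℝ} (hε : 0 < ε)
    (hT : 0 < T) (hpe : ∀ t, 0 ≤ t → ε ≤ sigmaMin (of fun a b => ∫ s in t..(t + T), Q s a b)) :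
    ∃ C α : ℝ, 0 < α ∧ ∀ Y : ℝ → Matrix ι κ ℝ, IsArrayFlow Γ Q Y → r ᵥ* Y 0 = 0 →
      ∀ t, 0 ≤ t → ‖Y t‖ ≤ C * ‖Y 0‖ * Real.exp (-(α * t)) := by
  have hP0 : 0 ≤ P := (smul_nonneg hη.le zero_le_one).trans hP.smul_one_le
  obtain ⟨L, hL, hPL⟩ := exists_le_smul_one (nonneg_iff_posSemidef.1 hP0).isHermitian
  set ρ := 1 + ε / (L * (2 * (1 + ‖Γ‖ ^ 2 * T ^ 2)))
  have hρ : 1 < ρ := lt_add_of_pos_right 1 (by positivity)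
  refine ⟨√(ρ * L / η), Real.log ρ / T / 2, by have := Real.log_pos hρ; positivity,
    fun Y hY hrY0 t ht => ?_⟩
  have hrY (s : ℝ) (hs : 0 ≤ s) : r ᵥ* Y s = 0 := hY.vecMul_eq_zero hrΓ hrY0 hs
  have hanti := hP.antitoneOn_energy hQ0 hY hrY
  have hstep (s : ℝ) (hs : 0 ≤ s) : ρ * energy P (Y (s + T))ᵀ ≤ energy P (Y s)ᵀ :=
    one_add_mul_le_of_mul_le_mul_sub hε hL (by positivity)
      (hanti hs (add_nonneg hs hT.le) (by linarith)) (energy_transpose_le_mul_norm_sq hPL (Y s))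
      (hP.mul_norm_sq_le hQ0 hQ1 hQint hY hrY hT.le hs (hpe s hs))
  have hdecay := le_mul_exp_of_forall_mul_le hT hρ.le
    (fun s _ => energy_nonneg hP0 (Y s)ᵀ) hanti hstep ht
  refine le_of_sq_le_sq ?_ (by positivity)
  calc ‖Y t‖ ^ 2 ≤ energy P (Y t)ᵀ / η := by
        rw [le_div_iff₀' hη]
        exact mul_norm_sq_le_energy_transpose hP.smul_one_le _
    _ ≤ ρ * (L * ‖Y 0‖ ^ 2) * Real.exp (-(Real.log ρ / T * t)) / η := by
        gcongr
        exact hdecay.trans (by gcongr; exact energy_transpose_le_mul_norm_sq hPL _)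
    _ = (√(ρ * L / η) * ‖Y 0‖ * Real.exp (-(Real.log ρ / T / 2 * t))) ^ 2 := by
        rw [mul_pow, mul_pow, Real.sq_sqrt (by positivity), ← Real.exp_nat_mul]
        push_cast
        ring_nf

theorem IsLyapunov.exists_eunorm_row_le_mul_exp [DecidableEq κ] (hP : IsLyapunov Γ r η P)
    (hη : 0 < η) (hrΓ : r ᵥ* Γ = 0) (hQ0 : ∀ t, 0 ≤ t → 0 ≤ Q t) (hQ1 : ∀ t, 0 ≤ t → Q t ≤ 1)
    (hQint : ∀ a b s u, IntervalIntegrable (fun t => Q t a b) volume s u) {ε T : ℝ} (hε : 0 < ε)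
    (hT : 0 < T) (hpe : ∀ t, 0 ≤ t → ε ≤ sigmaMin (of fun a b => ∫ s in t..(t + T), Q s a b))
    (hY : IsArrayFlow Γ Q Y) (hrY0 : r ᵥ* Y 0 = 0) :
    ∃ c α : ℝ, 0 < c ∧ 0 < α ∧ ∀ t, 0 ≤ t → ∀ i, eunorm (Y t i) ≤ c * Real.exp (-α * t) := by
  obtain ⟨C, α, hα, hdecay⟩ := hP.exists_norm_le_mul_exp hη hrΓ hQ0 hQ1 hQint hε hT hpe
  refine ⟨max (C * ‖Y 0‖) 1, α, by positivity, hα, fun t ht i => ?_⟩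
  calc eunorm (Y t i) ≤ ‖Y t‖ := eunorm_row_le_frobenius_norm (Y t) i
    _ ≤ C * ‖Y 0‖ * Real.exp (-(α * t)) := hdecay Y hY hrY0 t ht
    _ ≤ max (C * ‖Y 0‖) 1 * Real.exp (-α * t) := by
        rw [neg_mul]
        gcongr
        exact le_max_left _ _

end Flow

lemma IsInterconnection.sum_smul_sub {p n : ℕ} {Γ : Matrix (Fin p) (Fin p) ℝ}
    (hΓ : IsInterconnection Γ) (x : Fin p → Fin n → ℝ) (w : Fin n → ℝ) (i : Fin p) :
    ∑ j ∈ Finset.univ.filter (fun j => j ≠ i), Γ i j • (x j - x i) =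
      (Γ * of fun j a => x j a - w a) i := by
  ext b
  rw [mul_apply, ← Finset.add_sum_erase _ _ (Finset.mem_univ i), hΓ.2 i, Finset.filter_ne',
    Finset.sum_apply, of_apply, neg_mul, Finset.sum_mul, neg_add_eq_sub,
    ← Finset.sum_sub_distrib]
  refine Finset.sum_congr rfl fun j _ => ?_
  simp only [Pi.smul_apply, Pi.sub_apply, smul_eq_mul, of_apply]
  ring

lemma isArrayFlow_sub_of_hasDerivAt {p n : ℕ} {Γ : Matrix (Fin p) (Fin p) ℝ}
    (hΓ : IsInterconnection Γ) {Q : ℝ → Matrix (Fin n) (Fin n) ℝ} (hQ : ∀ t, 0 ≤ t → (Q t).IsSymm)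
    {x : Fin p → ℝ → Fin n → ℝ} (hx : ∀ i, ∀ t, 0 ≤ t → ∀ a, HasDerivAt (fun s => x i s a)
      ((Q t *ᵥ ∑ j ∈ Finset.univ.filter (fun j => j ≠ i), Γ i j • (x j t - x i t)) a) t)
    (w : Fin n → ℝ) : IsArrayFlow Γ Q fun t => of fun i a => x i t a - w a := by
  intro t ht
  refine hasDerivAt_matrix.2 fun i a => ?_
  have hrow : (Γ * of (fun i a => x i t a - w a) * Q t) i =
      Q t *ᵥ ∑ j ∈ Finset.univ.filter (fun j => j ≠ i), Γ i j • (x j t - x i t) := by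
    rw [hΓ.sum_smul_sub (fun i => x i t) w i, ← vecMul_transpose, (hQ t ht).eq]
    rfl
  rw [hrow]
  exact (hx i t ht a).sub_const (w a)

theorem stmt7 {p n : ℕ}
    (Γ : Matrix (Fin p) (Fin p) ℝ)
    (hΓ : IsInterconnection Γ) (hconn : ConnectedMat Γ)
    (Q : ℝ → Matrix (Fin n) (Fin n) ℝ)
    (hQ : ∀ t : ℝ, 0 ≤ t → InQbar (Q t))
    (hQint : ∀ a b : Fin n, ∀ s u : ℝ, IntervalIntegrable (fun t => Q t a b) volume s u)
    (hQpe : PersExcitingCT Q)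
    (r : Fin p → ℝ) (hr1 : Matrix.vecMul r Γ = 0) (hr2 : ∑ i, r i = 1)
    (x : Fin p → ℝ → Fin n → ℝ)
    (hx : ∀ i, ∀ t : ℝ, 0 ≤ t → ∀ a : Fin n,
      HasDerivAt (fun s => x i s a)
        (((Q t).mulVec (∑ j ∈ Finset.univ.filter (fun j => j ≠ i), Γ i j • (x j t - x i t))) a) t)
    (xbar : Fin n → ℝ) (hxbar : xbar = ∑ j, r j • x j 0) :
    ∃ c α : ℝ, 0 < c ∧ 0 < α ∧
      ∀ t : ℝ, 0 ≤ t → ∀ i, eunorm (x i t - xbar) ≤ c * Real.exp (-α * t) := by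
  obtain ⟨η, hη, P, hP⟩ := hΓ.exists_isLyapunov hconn hr1 hr2
  obtain ⟨ε, T, hε, hT, hpe⟩ := hQpe
  have hflow := isArrayFlow_sub_of_hasDerivAt hΓ (fun t ht => (hQ t ht).1.isHermitian) hx xbar
  have hrY0 : r ᵥ* of (fun i a => x i 0 a - xbar a) = 0 := by
    ext a
    simp [vecMul, dotProduct, mul_sub, Finset.sum_sub_distrib, ← Finset.sum_mul, hr2, hxbar]
  exact hP.exists_eunorm_row_le_mul_exp hη hr1 (fun t ht => (hQ t ht).nonneg)
    (fun t ht => (hQ t ht).le_one) hQint hε hT hpe hflow hrY0
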